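/- Under Assumptions (W) and (Lip), the M equivalence classes algorithm with Boltzmann policies converges for all sufficiently high temperatures η > 0: defining Φ̂_η(𝛍) as the block-constant policy ensemble with Φ̂_η(𝛍)^α_t(u|x) = exp(Q^𝛍_{α_m}(t,x,u)/η) / Σ_{u'∈𝒰} exp(Q^𝛍_{α_m}(t,x,u')/η) for α ∈ Ĩ_m, there exists η₀ > 0 such that for every η > η₀ the iteration 𝛍^{n+1} = Ψ̂(Φ̂_η(𝛍^n)) converges to a fixed point. -/

import Mathlib

open MeasureTheory Filter
open scoped BigOperators

namespace GMFG

variable {𝒳 𝒰 : Type*}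

/-- The probability simplex 𝒫(𝒳) on a finite set, as probability mass functions. -/
def simplex (𝒳 : Type*) [Fintype 𝒳] : Set (𝒳 → ℝ) :=
  {p | (∀ x, 0 ≤ p x) ∧ ∑ x, p x = 1}

/-- The set ℬ₁(𝒳) of (sub-probability) measures with total mass at most 1,
as mass functions. -/
def subProb (𝒳 : Type*) [Fintype 𝒳] : Set (𝒳 → ℝ) :=
  {p | (∀ x, 0 ≤ p x) ∧ ∑ x, p x ≤ 1}

/-- L¹ distance between measures on a finite set. -/
noncomputable def l1dist [Fintype 𝒳] (ν ν' : 𝒳 → ℝ) : ℝ := ∑ x, |ν x - ν' x|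

/-- Markovian feedback policies π ∈ Π = 𝒫(𝒰)^{𝒯×𝒳}. -/
def IsPolicy [Fintype 𝒰] (π : ℕ → 𝒳 → 𝒰 → ℝ) : Prop :=
  ∀ t x, (∀ u, 0 ≤ π t x u) ∧ ∑ u, π t x u = 1

/-- P : 𝒳×𝒰×ℬ₁(𝒳) → 𝒫(𝒳) is a transition kernel. -/
def IsKernel [Fintype 𝒳] [Fintype 𝒰] (P : 𝒳 → 𝒰 → (𝒳 → ℝ) → 𝒳 → ℝ) : Prop :=
  ∀ x u ν, ν ∈ subProb 𝒳 → P x u ν ∈ simplex 𝒳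

/-- Lipschitz continuity of the transition kernel w.r.t. the L¹ norm. -/
def KernelLipschitz [Fintype 𝒳] [Fintype 𝒰] (P : 𝒳 → 𝒰 → (𝒳 → ℝ) → 𝒳 → ℝ) (L : ℝ) : Prop :=
  ∀ x u ν ν', ν ∈ subProb 𝒳 → ν' ∈ subProb 𝒳 → l1dist (P x u ν) (P x u ν') ≤ L * l1dist ν ν'

/-- Lipschitz continuity of the reward w.r.t. the L¹ norm. -/
def RewardLipschitz [Fintype 𝒳] [Fintype 𝒰] (r : 𝒳 → 𝒰 → (𝒳 → ℝ) → ℝ) (L : ℝ) : Prop :=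
  ∀ x u ν ν', ν ∈ subProb 𝒳 → ν' ∈ subProb 𝒳 → |r x u ν - r x u ν'| ≤ L * l1dist ν ν'

/-- A graphon: symmetric, measurable, [0,1]-valued. -/
def IsGraphon (W : ℝ → ℝ → ℝ) : Prop :=
  Measurable (Function.uncurry W) ∧ (∀ a b, W a b = W b a) ∧ ∀ a b, W a b ∈ Set.Icc (0:ℝ) 1

/-- Lipschitz continuity of a graphon on [0,1]². -/
def GraphonLipschitz (W : ℝ → ℝ → ℝ) (L : ℝ) : Prop :=
  ∀ a b a' b' : ℝ, a ∈ Set.Icc (0:ℝ) 1 → b ∈ Set.Icc (0:ℝ) 1 → a' ∈ Set.Icc (0:ℝ) 1 →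
    b' ∈ Set.Icc (0:ℝ) 1 → |W a b - W a' b'| ≤ L * (|a - a'| + |b - b'|)

/-- The neighborhood mean field 𝔾^α = ∫₀¹ W(α,β) ν^β dβ of a state marginal ensemble ν. -/
noncomputable def nbhd [Fintype 𝒳] (W : ℝ → ℝ → ℝ) (ν : ℝ → 𝒳 → ℝ) (α : ℝ) : 𝒳 → ℝ :=
  fun x => ∫ β in Set.Ioc (0:ℝ) 1, W α β * ν β x

/-- 𝛍 = Ψ(𝛑): the (measurable) mean field ensemble generated by the policy ensemble 𝛑,
via μ^α_0 = μ₀ and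
μ^α_{t+1}(x') = Σ_{x,u} μ^α_t(x) π^α_t(u|x) P(x'|x,u,𝔾^α_t). -/
def IsMeanFieldOf [Fintype 𝒳] [Fintype 𝒰] (W : ℝ → ℝ → ℝ) (P : 𝒳 → 𝒰 → (𝒳 → ℝ) → 𝒳 → ℝ)
    (μ0 : 𝒳 → ℝ) (πe : ℝ → ℕ → 𝒳 → 𝒰 → ℝ) (μ : ℕ → ℝ → 𝒳 → ℝ) : Prop :=
  (∀ t x, Measurable fun α => μ t α x) ∧
  (∀ α ∈ Set.Icc (0:ℝ) 1, μ 0 α = μ0) ∧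
  ∀ t : ℕ, ∀ α ∈ Set.Icc (0:ℝ) 1, ∀ x' : 𝒳,
    μ (t+1) α x' = ∑ x, μ t α x * ∑ u, πe α t x u * P x u (nbhd W (μ t) α) x'

/-- The law of the state of a single mean field agent with neighborhood mean field
G and policy π: X_0 ∼ μ₀, U_t ∼ π_t(·|X_t), X_{t+1} ∼ P(·|X_t,U_t,G_t). -/
noncomputable def stateLaw [Fintype 𝒳] [Fintype 𝒰] (P : 𝒳 → 𝒰 → (𝒳 → ℝ) → 𝒳 → ℝ)
    (μ0 : 𝒳 → ℝ) (G : ℕ → 𝒳 → ℝ) (π : ℕ → 𝒳 → 𝒰 → ℝ) : ℕ → 𝒳 → ℝ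
  | 0 => μ0
  | (t+1) => fun x' => ∑ x, stateLaw P μ0 G π t x * ∑ u, π t x u * P x u (G t) x'

/-- Mean field objective J(π) = E[Σ_{t<T} r(X_t,U_t,G_t)] of a single agent whose
neighborhood mean field is G. -/
noncomputable def Jmf [Fintype 𝒳] [Fintype 𝒰] (T : ℕ) (r : 𝒳 → 𝒰 → (𝒳 → ℝ) → ℝ)
    (P : 𝒳 → 𝒰 → (𝒳 → ℝ) → 𝒳 → ℝ) (μ0 : 𝒳 → ℝ) (G : ℕ → 𝒳 → ℝ) (π : ℕ → 𝒳 → 𝒰 → ℝ) : ℝ :=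
  ∑ t ∈ Finset.range T, ∑ x, stateLaw P μ0 G π t x * ∑ u, π t x u * r x u (G t)

/-- A Graphon Mean Field Equilibrium: a measurable policy ensemble 𝛑 and mean field
ensemble 𝛍 with 𝛍 = Ψ(𝛑) and π^α optimal for J^𝛍_α for every α ∈ [0,1]. -/
def IsGMFE [Fintype 𝒳] [Fintype 𝒰] (T : ℕ) (W : ℝ → ℝ → ℝ) (P : 𝒳 → 𝒰 → (𝒳 → ℝ) → 𝒳 → ℝ)
    (r : 𝒳 → 𝒰 → (𝒳 → ℝ) → ℝ) (μ0 : 𝒳 → ℝ)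
    (πe : ℝ → ℕ → 𝒳 → 𝒰 → ℝ) (μ : ℕ → ℝ → 𝒳 → ℝ) : Prop :=
  (∀ t x u, Measurable fun α => πe α t x u) ∧
  (∀ α ∈ Set.Icc (0:ℝ) 1, IsPolicy (πe α)) ∧
  IsMeanFieldOf W P μ0 πe μ ∧
  ∀ α ∈ Set.Icc (0:ℝ) 1, ∀ π' : ℕ → 𝒳 → 𝒰 → ℝ, IsPolicy π' →
    Jmf T r P μ0 (fun t => nbhd W (μ t) α) π' ≤ Jmf T r P μ0 (fun t => nbhd W (μ t) α) (πe α)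

/-- α ↦ π^α is Lipschitz continuous up to a finite set D of discontinuities. -/
def EnsembleLipschitzUpTo [Fintype 𝒳] [Fintype 𝒰] (πe : ℝ → ℕ → 𝒳 → 𝒰 → ℝ) : Prop :=
  ∃ (L : ℝ) (D : Finset ℝ), ∀ (t : ℕ) (x : 𝒳) (u : 𝒰),
    ∀ α ∈ Set.Icc (0:ℝ) 1, ∀ β ∈ Set.Icc (0:ℝ) 1,
      (∀ d ∈ D, d ∉ Set.uIcc α β) → |πe α t x u - πe β t x u| ≤ L * |α - β|

/-- Edge indicators of a simple (undirected) graph. -/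
def IsEdgeWeights {N : ℕ} (ξ : Fin N → Fin N → ℝ) : Prop :=
  (∀ i j, ξ i j = 0 ∨ ξ i j = 1) ∧ ∀ i j, ξ i j = ξ j i

/-- Empirical neighborhood mean field 𝔾ⁱ = (1/N) Σ_j ξ_{ij} δ_{X^j}. -/
noncomputable def empNbhd [Fintype 𝒳] [DecidableEq 𝒳] {N : ℕ} (ξ : Fin N → Fin N → ℝ)
    (X : Fin N → 𝒳) (i : Fin N) : 𝒳 → ℝ :=
  fun x => (N : ℝ)⁻¹ * ∑ j, ξ i j * (if X j = x then 1 else 0)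

/-- The joint law of the N agents' states at time t: X^i_0 ∼ μ₀ i.i.d.,
U^i_t ∼ π^i_t(·|X^i_t), X^i_{t+1} ∼ P(·|X^i_t,U^i_t,𝔾^i_t) conditionally independently. -/
noncomputable def jointLaw [Fintype 𝒳] [DecidableEq 𝒳] [Fintype 𝒰] {N : ℕ}
    (P : 𝒳 → 𝒰 → (𝒳 → ℝ) → 𝒳 → ℝ) (μ0 : 𝒳 → ℝ) (ξ : Fin N → Fin N → ℝ)
    (πs : Fin N → ℕ → 𝒳 → 𝒰 → ℝ) : ℕ → (Fin N → 𝒳) → ℝ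
  | 0 => fun X => ∏ i, μ0 (X i)
  | (t+1) => fun Y => ∑ X : Fin N → 𝒳, jointLaw P μ0 ξ πs t X *
      ∏ i, ∑ u, πs i t (X i) u * P (X i) u (empNbhd ξ X i) (Y i)

/-- The objective J^N_i = E[Σ_{t<T} r(X^i_t,U^i_t,𝔾^i_t)] of agent i in the N-agent game. -/
noncomputable def JN [Fintype 𝒳] [DecidableEq 𝒳] [Fintype 𝒰] {N : ℕ} (T : ℕ)
    (r : 𝒳 → 𝒰 → (𝒳 → ℝ) → ℝ) (P : 𝒳 → 𝒰 → (𝒳 → ℝ) → 𝒳 → ℝ) (μ0 : 𝒳 → ℝ)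
    (ξ : Fin N → Fin N → ℝ) (πs : Fin N → ℕ → 𝒳 → 𝒰 → ℝ) (i : Fin N) : ℝ :=
  ∑ t ∈ Finset.range T, ∑ X : Fin N → 𝒳, jointLaw P μ0 ξ πs t X *
    ∑ u, πs i t (X i) u * r (X i) u (empNbhd ξ X i)

/-- Γ_N(𝛑) = (π^{1/N},…,π^{N/N}) (agent i : Fin N has graphon index (i+1)/N). -/
noncomputable def gammaN (πe : ℝ → ℕ → 𝒳 → 𝒰 → ℝ) (N : ℕ) : Fin N → ℕ → 𝒳 → 𝒰 → ℝ :=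
  fun i => πe ((((i : ℕ) : ℝ) + 1) / N)

/-- The step graphon W_N of a finite graph: W_N(x,y) = ξ_{⌈Nx⌉,⌈Ny⌉}. -/
noncomputable def stepGraphon {N : ℕ} (ξ : Fin N → Fin N → ℝ) : ℝ → ℝ → ℝ := fun a b =>
  ∑ i : Fin N, ∑ j : Fin N,
    (if ((i : ℕ) : ℝ) / N < a ∧ a ≤ (((i : ℕ) : ℝ) + 1) / N then 1 else 0) *
    (if ((j : ℕ) : ℝ) / N < b ∧ b ≤ (((j : ℕ) : ℝ) + 1) / N then 1 else 0) * ξ i j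

/-- Assumption (W): ‖W_N − W‖_{L∞→L1} → 0, i.e.
sup_{‖g‖∞ ≤ 1} ∫₀¹ |∫₀¹ (W_N(α,β) − W(α,β)) g(β) dβ| dα → 0. -/
def OpConvergesTo (WN : (N : ℕ) → ℝ → ℝ → ℝ) (W : ℝ → ℝ → ℝ) : Prop :=
  ∀ ε > (0:ℝ), ∃ N₀ : ℕ, ∀ N ≥ N₀, ∀ g : ℝ → ℝ, Measurable g → (∀ β, |g β| ≤ 1) →
    (∫ α in Set.Ioc (0:ℝ) 1, |∫ β in Set.Ioc (0:ℝ) 1, (WN N α β - W α β) * g β|) ≤ ε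

/-- ‖W_N − W‖_{L∞→L1} = O(1/√N). -/
def OpRateSqrt (WN : (N : ℕ) → ℝ → ℝ → ℝ) (W : ℝ → ℝ → ℝ) : Prop :=
  ∃ C : ℝ, ∀ N : ℕ, 1 ≤ N → ∀ g : ℝ → ℝ, Measurable g → (∀ β, |g β| ≤ 1) →
    (∫ α in Set.Ioc (0:ℝ) 1, |∫ β in Set.Ioc (0:ℝ) 1, (WN N α β - W α β) * g β|) ≤ C / Real.sqrt N

/-- 𝛍^N_t(f) = ∫₀¹ f(X^{⌈Nα⌉}, α) dα, the integral of f against the random empirical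
step measure ensemble. -/
noncomputable def empInt [Fintype 𝒳] {N : ℕ} (f : 𝒳 → ℝ → ℝ) (X : Fin N → 𝒳) : ℝ :=
  ∑ i : Fin N, ∫ α in Set.Ioc (((i : ℕ) : ℝ) / N) ((((i : ℕ) : ℝ) + 1) / N), f (X i) α

/-- 𝛍_t(f) = ∫₀¹ Σ_x f(x,α) μ^α_t(x) dα. -/
noncomputable def mfInt [Fintype 𝒳] (f : 𝒳 → ℝ → ℝ) (ν : ℝ → 𝒳 → ℝ) : ℝ :=
  ∫ α in Set.Ioc (0:ℝ) 1, ∑ x, f x α * ν α x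

/-- The representative α_m = (m+1)/M of the m-th equivalence class Ĩ_m = (m/M,(m+1)/M]. -/
noncomputable def rep (M : ℕ) (m : Fin M) : ℝ := (((m : ℕ) : ℝ) + 1) / M

/-- Discretized neighborhood mean field 𝔾̂^{α_m} = (1/M) Σ_n W(α_m,α_n) ν^{α_n}. -/
noncomputable def approxNbhd [Fintype 𝒳] {M : ℕ} (W : ℝ → ℝ → ℝ) (ν : Fin M → 𝒳 → ℝ)
    (m : Fin M) : 𝒳 → ℝ :=
  fun x => (M : ℝ)⁻¹ * ∑ n, W (rep M m) (rep M n) * ν n x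

/-- The approximate mean field μ̂ = Ψ̂(𝛑) of the M equivalence classes method. -/
noncomputable def approxMF [Fintype 𝒳] [Fintype 𝒰] {M : ℕ} (W : ℝ → ℝ → ℝ)
    (P : 𝒳 → 𝒰 → (𝒳 → ℝ) → 𝒳 → ℝ) (μ0 : 𝒳 → ℝ) (πm : Fin M → ℕ → 𝒳 → 𝒰 → ℝ) :
    ℕ → Fin M → 𝒳 → ℝ
  | 0 => fun _ => μ0
  | (t+1) => fun m x' => ∑ x, approxMF W P μ0 πm t m x *
      ∑ u, πm m t x u * P x u (approxNbhd W (approxMF W P μ0 πm t) m) x'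

/-- A solution (𝛑, 𝛍) of the M equivalence classes method: 𝛑 is determined by policies
π^{α_m} (one per class), each optimal for the generated approximate mean field 𝛍 = Ψ̂(𝛑). -/
def IsEqClassSolution [Fintype 𝒳] [Fintype 𝒰] (T : ℕ) {M : ℕ} (W : ℝ → ℝ → ℝ)
    (P : 𝒳 → 𝒰 → (𝒳 → ℝ) → 𝒳 → ℝ) (r : 𝒳 → 𝒰 → (𝒳 → ℝ) → ℝ) (μ0 : 𝒳 → ℝ)
    (πm : Fin M → ℕ → 𝒳 → 𝒰 → ℝ) : Prop :=
  (∀ m, IsPolicy (πm m)) ∧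
  ∀ m, ∀ π' : ℕ → 𝒳 → 𝒰 → ℝ, IsPolicy π' →
    Jmf T r P μ0 (fun t => approxNbhd W (approxMF W P μ0 πm t) m) π'
      ≤ Jmf T r P μ0 (fun t => approxNbhd W (approxMF W P μ0 πm t) m) (πm m)

/-- The optimal action value function Q with k steps to go from time t,
Q(t,x,u) = r(x,u,G_t) + Σ_{x'} P(x'|x,u,G_t) max_{u'} Q(t+1,x',u'). -/
noncomputable def Qfun [Fintype 𝒳] [Fintype 𝒰] [Nonempty 𝒰] (r : 𝒳 → 𝒰 → (𝒳 → ℝ) → ℝ)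
    (P : 𝒳 → 𝒰 → (𝒳 → ℝ) → 𝒳 → ℝ) (G : ℕ → 𝒳 → ℝ) : ℕ → ℕ → 𝒳 → 𝒰 → ℝ
  | 0 => fun _ _ _ => 0
  | (k+1) => fun t x u => r x u (G t) + ∑ x', P x u (G t) x' *
      Finset.univ.sup' Finset.univ_nonempty (fun u' => Qfun r P G k (t+1) x' u')

/-- The Boltzmann (softmax) policy Φ̂_η(𝛍) of the M equivalence classes method with
horizon T, temperature η and block mean field ν. -/
noncomputable def boltzmann [Fintype 𝒳] [Fintype 𝒰] [Nonempty 𝒰] (T : ℕ) (η : ℝ)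
    (r : 𝒳 → 𝒰 → (𝒳 → ℝ) → ℝ) (P : 𝒳 → 𝒰 → (𝒳 → ℝ) → 𝒳 → ℝ) (W : ℝ → ℝ → ℝ) {M : ℕ}
    (ν : ℕ → Fin M → 𝒳 → ℝ) : Fin M → ℕ → 𝒳 → 𝒰 → ℝ :=
  fun m t x u =>
    Real.exp (Qfun r P (fun s => approxNbhd W (ν s) m) (T - t) t x u / η) /
      ∑ u' : 𝒰, Real.exp (Qfun r P (fun s => approxNbhd W (ν s) m) (T - t) t x u' / η)

/-- One step 𝛍 ↦ Ψ̂(Φ̂_η(𝛍)) of the Boltzmann fixed point iteration. -/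
noncomputable def boltzIter [Fintype 𝒳] [Fintype 𝒰] [Nonempty 𝒰] (T : ℕ) (η : ℝ)
    (r : 𝒳 → 𝒰 → (𝒳 → ℝ) → ℝ) (P : 𝒳 → 𝒰 → (𝒳 → ℝ) → 𝒳 → ℝ) (W : ℝ → ℝ → ℝ) (μ0 : 𝒳 → ℝ)
    {M : ℕ} (ν : ℕ → Fin M → 𝒳 → ℝ) : ℕ → Fin M → 𝒳 → ℝ :=
  fun t => approxMF W P μ0 (boltzmann T η r P W ν) t

/-!
A mean field enters the Boltzmann policy only through `Q / η`, and softmax is Lipschitz, so `Φ̂_η` is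
Lipschitz with constant of order `1 / η`. Since `Ψ̂` is Lipschitz independently of `η`, the composition
`Ψ̂ ∘ Φ̂_η` is a contraction once `η` is large.

Times range over all of `ℕ` here, and the Lipschitz constant of `Ψ̂` at time `t` grows with `t`. The
contraction therefore only takes place on the times `t < T`; this suffices because the action values,
and hence the next iterate at every time, depend on those times alone.
-/

open Function Finset
open scoped NNReal Topology

section FixedPoint

variable {ι E : Type*} [MetricSpace E]

theorem exists_isFixedPt_tendsto_iterate_of_dist_le_restrict [CompleteSpace E] [Nonempty E]
    (s : Finset ι) {F : (ι → E) → ι → E} {K : ι → ℝ≥0}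
    (hF : ∀ v w i, dist (F v i) (F w i) ≤ K i * dist (s.restrict v) (s.restrict w))
    (hK : ∀ i ∈ s, K i < 1) :
    ∃ v, IsFixedPt F v ∧ ∀ w, Tendsto (fun n => F^[n] w) atTop (𝓝 v) := by
  classical
  let extend (y : s → E) : ι → E := fun i => if h : i ∈ s then y ⟨i, h⟩ else Classical.arbitrary E
  have restrict_extend (y : s → E) : s.restrict (extend y) = y := by
    ext i
    simp [extend]
  let f (y : s → E) : s → E := s.restrict (F (extend y))
  have hf : ContractingWith (s.sup K) f := by
    refine ⟨(Finset.sup_lt_iff zero_lt_one).2 hK, LipschitzWith.of_dist_le_mul fun y z => ?_⟩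
    refine (dist_pi_le_iff (by positivity)).2 fun i => ?_
    calc dist (F (extend y) i) (F (extend z) i) ≤ K i * dist y z := by
          simpa only [restrict_extend] using hF (extend y) (extend z) i
      _ ≤ s.sup K * dist y z := by
          gcongr
          exact Finset.le_sup i.2
  have F_extend_restrict (v : ι → E) : F (extend (s.restrict v)) = F v :=
    funext fun i => dist_le_zero.1 (by
      simpa only [restrict_extend, dist_self, mul_zero] using hF (extend (s.restrict v)) v i)
  have hsemi : Semiconj s.restrict F f := fun v => congrArg s.restrict (F_extend_restrict v).symm
  let y := hf.fixedPoint
  have hy : s.restrict (F (extend y)) = y := hf.fixedPoint_isFixedPt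
  refine ⟨F (extend y), ?_, fun w => ?_⟩
  · calc F (F (extend y)) = F (extend (s.restrict (F (extend y)))) := (F_extend_restrict _).symm
      _ = F (extend y) := by rw [hy]
  · have hlim : Tendsto (fun n => dist (s.restrict (F^[n] w)) y) atTop (𝓝 0) := by
      simp only [hsemi.iterate_right _ w]
      exact tendsto_iff_dist_tendsto_zero.1 (hf.tendsto_iterate_fixedPoint (s.restrict w))
    refine (tendsto_add_atTop_iff_nat 1).1 (tendsto_pi_nhds.2 fun i => ?_)
    refine tendsto_iff_dist_tendsto_zero.2 (squeeze_zero (fun _ => dist_nonneg) (fun n => ?_)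
      (by simpa only [mul_zero] using hlim.const_mul (K i : ℝ)))
    simpa only [iterate_succ_apply', restrict_extend] using hF (F^[n] w) (extend y) i

theorem exists_isFixedPt_tendsto_iterate_of_dist_le_restrict_of_mem {S : Set E}
    (hS : IsComplete S) (hne : S.Nonempty) (s : Finset ι) {F : (ι → E) → ι → E} {K : ι → ℝ≥0}
    (hFS : ∀ v i, F v i ∈ S)
    (hF : ∀ v w, (∀ i, v i ∈ S) → (∀ i, w i ∈ S) →
      ∀ i, dist (F v i) (F w i) ≤ K i * dist (s.restrict v) (s.restrict w))
    (hK : ∀ i ∈ s, K i < 1) :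
    ∃ v, IsFixedPt F v ∧ ∀ w, Tendsto (fun n => F^[n] w) atTop (𝓝 v) := by
  have : CompleteSpace S := hS.completeSpace_coe
  have : Nonempty S := hne.to_subtype
  let val (v : ι → S) : ι → E := fun i => v i
  let G (v : ι → S) : ι → S := fun i => ⟨F (val v) i, hFS _ i⟩
  have hval : Continuous val := by fun_prop
  have hsemi : Semiconj val G F := fun _ => rfl
  obtain ⟨v, hv, hlim⟩ := exists_isFixedPt_tendsto_iterate_of_dist_le_restrict s (F := G)
    (fun v w => hF (val v) (val w) (fun i => (v i).2) (fun i => (w i).2)) hK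
  refine ⟨val v, hv.map hsemi, fun w => ?_⟩
  let w₁ : ι → S := fun i => ⟨F w i, hFS w i⟩
  refine (tendsto_add_atTop_iff_nat 1).1 (((hval.tendsto v).comp (hlim w₁)).congr fun n => ?_)
  exact hsemi.iterate_right n w₁

end FixedPoint

section Mass

variable {ι X E : Type*} [Fintype ι] [Fintype X] [SeminormedAddCommGroup E] [NormedSpace ℝ E]

theorem simplex_subset_subProb : simplex X ⊆ subProb X := fun _ hp => ⟨hp.1, hp.2.le⟩

theorem isClosed_simplex : IsClosed (simplex X) :=
  isClosed_stdSimplex ℝ X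

theorem zero_mem_subProb : (0 : X → ℝ) ∈ subProb X :=
  ⟨fun _ => le_rfl, by simp⟩

theorem l1dist_nonneg (p q : X → ℝ) : 0 ≤ l1dist p q :=
  sum_nonneg fun _ _ => abs_nonneg _

theorem l1dist_self (p : X → ℝ) : l1dist p p = 0 := by
  simp [l1dist]

theorem l1dist_zero_right_le_one {p : X → ℝ} (hp : p ∈ subProb X) : l1dist p 0 ≤ 1 :=
  calc l1dist p 0 = ∑ x, p x := sum_congr rfl fun x _ => by simp [abs_of_nonneg (hp.1 x)]
    _ ≤ 1 := hp.2

theorem l1dist_eq_norm_toLp (p q : X → ℝ) :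
    l1dist p q = ‖WithLp.toLp 1 p - WithLp.toLp 1 q‖ := by
  simp [l1dist, PiLp.norm_eq_of_L1]

theorem dist_le_l1dist (p q : X → ℝ) : dist p q ≤ l1dist p q :=
  (dist_pi_le_iff (l1dist_nonneg p q)).2 fun x =>
    single_le_sum (f := fun x => |p x - q x|) (fun _ _ => abs_nonneg _) (mem_univ x)

theorem l1dist_le_card_mul_dist (p q : X → ℝ) : l1dist p q ≤ Fintype.card X * dist p q :=
  calc l1dist p q ≤ ∑ _x : X, dist p q := sum_le_sum fun x _ => dist_le_pi_dist p q x
    _ = Fintype.card X * dist p q := by simp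

theorem norm_sum_smul_le_of_mem_subProb {w : ι → ℝ} (hw : w ∈ subProb ι) {f : ι → E} {c : ℝ}
    (hc : 0 ≤ c) (hf : ∀ i, ‖f i‖ ≤ c) : ‖∑ i, w i • f i‖ ≤ c :=
  calc ‖∑ i, w i • f i‖ ≤ ∑ i, w i * c := norm_sum_le_of_le _ fun i _ => by
        rw [norm_smul, Real.norm_of_nonneg (hw.1 i)]
        exact mul_le_mul_of_nonneg_left (hf i) (hw.1 i)
    _ = (∑ i, w i) * c := (sum_mul ..).symm
    _ ≤ c := mul_le_of_le_one_left hc hw.2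

theorem norm_sum_smul_sub_sum_smul_le {w w' : ι → ℝ} (hw' : w' ∈ subProb ι) {f f' : ι → E}
    {B c : ℝ} (hc : 0 ≤ c) (hf : ∀ i, ‖f i‖ ≤ B) (hff' : ∀ i, ‖f i - f' i‖ ≤ c) :
    ‖∑ i, w i • f i - ∑ i, w' i • f' i‖ ≤ l1dist w w' * B + c := by
  have hsplit : ∑ i, w i • f i - ∑ i, w' i • f' i
      = ∑ i, (w i - w' i) • f i + ∑ i, w' i • (f i - f' i) := by
    simp only [sub_smul, smul_sub, sum_sub_distrib]
    abel
  have hweights : ‖∑ i, (w i - w' i) • f i‖ ≤ l1dist w w' * B := by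
    rw [l1dist, sum_mul]
    refine norm_sum_le_of_le _ fun i _ => ?_
    rw [norm_smul, Real.norm_eq_abs]
    exact mul_le_mul_of_nonneg_left (hf i) (abs_nonneg _)
  rw [hsplit]
  exact norm_add_le_of_le hweights (norm_sum_smul_le_of_mem_subProb hw' hc hff')

/-- The mixture of the mass functions `f i` with weights `w i`. Both the discretized neighborhood
mean field and a transition of the mean field are of this form. -/
def mixture {Y : Type*} (w : ι → ℝ) (f : ι → Y → ℝ) : Y → ℝ := fun y => ∑ i, w i * f i y

theorem mixture_nonneg {Y : Type*} {w : ι → ℝ} {f : ι → Y → ℝ} (hw : ∀ i, 0 ≤ w i)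
    (hf : ∀ i y, 0 ≤ f i y) (y : Y) : 0 ≤ mixture w f y :=
  sum_nonneg fun i _ => mul_nonneg (hw i) (hf i y)

theorem sum_mixture (w : ι → ℝ) (f : ι → X → ℝ) : ∑ x, mixture w f x = ∑ i, w i * ∑ x, f i x := by
  simp only [mixture, mul_sum]
  exact sum_comm

theorem mixture_mem_simplex {w : ι → ℝ} {f : ι → X → ℝ} (hw : w ∈ simplex ι)
    (hf : ∀ i, f i ∈ simplex X) : mixture w f ∈ simplex X :=
  ⟨mixture_nonneg hw.1 fun i => (hf i).1, by simp only [sum_mixture, (hf _).2, mul_one, hw.2]⟩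

theorem mixture_mem_subProb {w : ι → ℝ} {f : ι → X → ℝ} (hw : w ∈ subProb ι)
    (hf : ∀ i, f i ∈ subProb X) : mixture w f ∈ subProb X := by
  refine ⟨mixture_nonneg hw.1 fun i => (hf i).1, ?_⟩
  calc ∑ x, mixture w f x = ∑ i, w i * ∑ x, f i x := sum_mixture w f
    _ ≤ ∑ i, w i := sum_le_sum fun i _ => mul_le_of_le_one_right (hw.1 i) (hf i).2
    _ ≤ 1 := hw.2

theorem l1dist_mixture_le {w w' : ι → ℝ} (hw' : w' ∈ subProb ι) {f f' : ι → X → ℝ}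
    (hf : ∀ i, f i ∈ subProb X) {c : ℝ} (hc : 0 ≤ c) (hff' : ∀ i, l1dist (f i) (f' i) ≤ c) :
    l1dist (mixture w f) (mixture w' f') ≤ l1dist w w' + c := by
  have toLp_mixture (w : ι → ℝ) (f : ι → X → ℝ) :
      WithLp.toLp 1 (mixture w f) = ∑ i, w i • WithLp.toLp 1 (f i) := by
    ext x
    simp [mixture]
  have hnorm (i : ι) : ‖WithLp.toLp 1 (f i)‖ ≤ 1 := by
    simpa [l1dist_eq_norm_toLp] using l1dist_zero_right_le_one (hf i)
  simp only [l1dist_eq_norm_toLp (X := X)] at hff' ⊢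
  simpa only [toLp_mixture, mul_one] using norm_sum_smul_sub_sum_smul_le hw' hc hnorm hff'

end Mass

section Supremum

variable {ι α : Type*} [AddCommGroup α] [LinearOrder α] [IsOrderedAddMonoid α]
  {s : Finset ι} (hs : s.Nonempty) {f g : ι → α} {c : α}

theorem abs_sup'_sub_sup'_le (h : ∀ i ∈ s, |f i - g i| ≤ c) : |s.sup' hs f - s.sup' hs g| ≤ c := by
  refine abs_sub_le_iff.2 ⟨sub_le_iff_le_add.2 ?_, sub_le_iff_le_add.2 ?_⟩
  · exact sup'_le _ _ fun i hi => (sub_le_iff_le_add.1 (abs_sub_le_iff.1 (h i hi)).1).trans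
      (by gcongr; exact le_sup' g hi)
  · exact sup'_le _ _ fun i hi => (sub_le_iff_le_add.1 (abs_sub_le_iff.1 (h i hi)).2).trans
      (by gcongr; exact le_sup' f hi)

theorem abs_sup'_le (h : ∀ i ∈ s, |f i| ≤ c) : |s.sup' hs f| ≤ c := by
  simpa only [sup'_const, sub_zero] using
    abs_sup'_sub_sup'_le hs (g := fun _ => (0 : α)) (by simpa only [sub_zero] using h)

end Supremum

section Softmax

variable {U : Type*} [Fintype U]

/-- The softmax distribution with logits `q`; the Boltzmann policy at temperature `η` is the case
`q = Q / η`. -/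
noncomputable def softmax (q : U → ℝ) : U → ℝ :=
  fun u => Real.exp (q u) / ∑ v, Real.exp (q v)

variable [Nonempty U]

theorem sum_exp_pos (q : U → ℝ) : 0 < ∑ v, Real.exp (q v) :=
  sum_pos (fun _ _ => Real.exp_pos _) univ_nonempty

theorem softmax_mem_simplex (q : U → ℝ) : softmax q ∈ simplex U := by
  refine ⟨fun u => div_nonneg (Real.exp_pos _).le (sum_exp_pos q).le, ?_⟩
  simp only [softmax, ← sum_div, div_self (sum_exp_pos q).ne']

theorem exp_neg_mul_softmax_le {q q' : U → ℝ} {ε : ℝ} (h : ∀ u, |q u - q' u| ≤ ε) (u : U) :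
    Real.exp (-(2 * ε)) * softmax q u ≤ softmax q' u := by
  have hnum : Real.exp (q u - ε) ≤ Real.exp (q' u) :=
    Real.exp_le_exp.2 (by linarith [(abs_sub_le_iff.1 (h u)).1])
  have hden : ∑ v, Real.exp (q' v) ≤ Real.exp ε * ∑ v, Real.exp (q v) := by
    rw [mul_sum]
    refine sum_le_sum fun v _ => ?_
    rw [← Real.exp_add]
    exact Real.exp_le_exp.2 (by linarith [(abs_sub_le_iff.1 (h v)).2])
  calc Real.exp (-(2 * ε)) * softmax q u
      = Real.exp (q u - ε) / (Real.exp ε * ∑ v, Real.exp (q v)) := by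
        have hexp : Real.exp (-(2 * ε)) * Real.exp (q u) = Real.exp (q u - ε) / Real.exp ε := by
          rw [← Real.exp_add, ← Real.exp_sub]
          ring_nf
        rw [softmax, ← mul_div_assoc, hexp, div_div]
    _ ≤ softmax q' u := div_le_div₀ (Real.exp_pos _).le hnum (sum_exp_pos q') hden

theorem softmax_sub_softmax_le {q q' : U → ℝ} {ε : ℝ} (h : ∀ u, |q u - q' u| ≤ ε) (u : U) :
    softmax q u - softmax q' u ≤ 2 * ε * softmax q u := by
  have hexp : (1 - 2 * ε) * softmax q u ≤ Real.exp (-(2 * ε)) * softmax q u :=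
    mul_le_mul_of_nonneg_right (Real.one_sub_le_exp_neg _) ((softmax_mem_simplex q).1 u)
  linarith [exp_neg_mul_softmax_le h u]

theorem l1dist_softmax_le {q q' : U → ℝ} {ε : ℝ} (h : ∀ u, |q u - q' u| ≤ ε) :
    l1dist (softmax q) (softmax q') ≤ 4 * ε := by
  have hε : 0 ≤ ε := (abs_nonneg _).trans (h (Classical.arbitrary U))
  have h' (u : U) : |q' u - q u| ≤ ε := by simpa only [abs_sub_comm] using h u
  calc l1dist (softmax q) (softmax q')
      ≤ ∑ u, 2 * ε * (softmax q u + softmax q' u) := sum_le_sum fun u _ => by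
        have hq := mul_nonneg hε ((softmax_mem_simplex q).1 u)
        have hq' := mul_nonneg hε ((softmax_mem_simplex q').1 u)
        refine abs_sub_le_iff.2 ⟨?_, ?_⟩
        · linarith [softmax_sub_softmax_le h u]
        · linarith [softmax_sub_softmax_le h' u]
    _ = 4 * ε := by
        rw [← mul_sum, sum_add_distrib, (softmax_mem_simplex q).2, (softmax_mem_simplex q').2]
        ring

end Softmax

section Model

variable {X U : Type*} [Fintype X] [Fintype U] {r : X → U → (X → ℝ) → ℝ}
  {P : X → U → (X → ℝ) → X → ℝ} {Lr LP : ℝ≥0}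

theorem RewardLipschitz.toNNReal {L : ℝ} (h : RewardLipschitz r L) :
    RewardLipschitz r L.toNNReal := fun x u ν ν' hν hν' =>
  (h x u ν ν' hν hν').trans
    (mul_le_mul_of_nonneg_right (Real.le_coe_toNNReal L) (l1dist_nonneg ν ν'))

theorem KernelLipschitz.toNNReal {L : ℝ} (h : KernelLipschitz P L) :
    KernelLipschitz P L.toNNReal := fun x u ν ν' hν hν' =>
  (h x u ν ν' hν hν').trans
    (mul_le_mul_of_nonneg_right (Real.le_coe_toNNReal L) (l1dist_nonneg ν ν'))

theorem RewardLipschitz.exists_abs_le (hr : RewardLipschitz r Lr) :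
    ∃ R : ℝ≥0, ∀ x u, ∀ ν ∈ subProb X, |r x u ν| ≤ R := by
  obtain ⟨R₀, hR₀⟩ := Finite.exists_le fun a : X × U => ‖r a.1 a.2 0‖₊
  refine ⟨R₀ + Lr, fun x u ν hν => ?_⟩
  have hzero : |r x u 0| ≤ R₀ := hR₀ (x, u)
  have hdiff : |r x u ν - r x u 0| ≤ Lr :=
    (hr x u ν 0 hν zero_mem_subProb).trans
      (mul_le_of_le_one_right Lr.2 (l1dist_zero_right_le_one hν))
  calc |r x u ν| = |r x u 0 + (r x u ν - r x u 0)| := by rw [add_sub_cancel]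
    _ ≤ ((R₀ + Lr : ℝ≥0) : ℝ) := (abs_add_le _ _).trans (add_le_add hzero hdiff)

section ActionValue

variable [Nonempty U] {G G' : ℕ → X → ℝ}

theorem abs_Qfun_le (hP : IsKernel P) {R : ℝ≥0} (hR : ∀ x u, ∀ ν ∈ subProb X, |r x u ν| ≤ R)
    (hG : ∀ s, G s ∈ subProb X) (k t : ℕ) (x : X) (u : U) : |Qfun r P G k t x u| ≤ k * R := by
  induction k generalizing t x u with
  | zero => simp [Qfun]
  | succ k ih =>
    have hcont := norm_sum_smul_le_of_mem_subProb (c := k * R)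
      (f := fun x' => univ.sup' univ_nonempty fun u' => Qfun r P G k (t + 1) x' u')
      (simplex_subset_subProb (hP x u (G t) (hG t))) (by positivity)
      fun x' => abs_sup'_le univ_nonempty fun u' _ => ih (t + 1) x' u'
    refine ((abs_add_le _ _).trans (add_le_add (hR x u _ (hG t)) hcont)).trans_eq ?_
    push_cast
    ring

theorem abs_Qfun_sub_Qfun_le (hP : IsKernel P) (hPLip : KernelLipschitz P LP)
    (hrLip : RewardLipschitz r Lr) {R : ℝ≥0} (hR : ∀ x u, ∀ ν ∈ subProb X, |r x u ν| ≤ R)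
    (hG : ∀ s, G s ∈ subProb X) (hG' : ∀ s, G' s ∈ subProb X) {δ : ℝ} (hδ : 0 ≤ δ) (k t : ℕ)
    (hGG' : ∀ s, t ≤ s → s < t + k → l1dist (G s) (G' s) ≤ δ) (x : X) (u : U) :
    |Qfun r P G k t x u - Qfun r P G' k t x u| ≤ k * (Lr + LP * (k * R)) * δ := by
  induction k generalizing t x u with
  | zero => simp [Qfun]
  | succ k ih =>
    have hGG't : l1dist (G t) (G' t) ≤ δ := hGG' t le_rfl (by omega)
    have hreward : |r x u (G t) - r x u (G' t)| ≤ Lr * δ :=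
      (hrLip x u _ _ (hG t) (hG' t)).trans (by gcongr)
    have hkernel : l1dist (P x u (G t)) (P x u (G' t)) ≤ LP * δ :=
      (hPLip x u _ _ (hG t) (hG' t)).trans (by gcongr)
    have hcont := norm_sum_smul_sub_sum_smul_le (w := P x u (G t))
      (f := fun x' => univ.sup' univ_nonempty fun u' => Qfun r P G k (t + 1) x' u')
      (f' := fun x' => univ.sup' univ_nonempty fun u' => Qfun r P G' k (t + 1) x' u')
      (c := k * (Lr + LP * (k * R)) * δ)
      (simplex_subset_subProb (hP x u (G' t) (hG' t))) (by positivity)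
      (fun x' => abs_sup'_le univ_nonempty fun u' _ => abs_Qfun_le hP hR hG k (t + 1) x' u')
      fun x' => abs_sup'_sub_sup'_le univ_nonempty fun u' _ =>
        ih (t + 1) (fun s hs hs' => hGG' s (by omega) (by omega)) x' u'
    simp only [Qfun, add_sub_add_comm]
    calc _ ≤ Lr * δ + (LP * δ * (k * R) + k * (Lr + LP * (k * R)) * δ) :=
          (abs_add_le _ _).trans (add_le_add hreward (hcont.trans (by gcongr)))
      _ = (k + 1) * (Lr + LP * (k * R)) * δ := by ring
      _ ≤ ↑(k + 1) * (Lr + LP * (↑(k + 1) * R)) * δ := by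
          push_cast
          gcongr
          linarith

end ActionValue

section Transition

variable {G G' : X → ℝ} {p p' : X → ℝ} {κ κ' : X → U → ℝ}

/-- The law of the next state of an agent with state law `p`, decision rule `κ` and neighborhood
mean field `G`. -/
def transition (P : X → U → (X → ℝ) → X → ℝ) (p : X → ℝ) (κ : X → U → ℝ) (G : X → ℝ) : X → ℝ :=
  mixture p fun x => mixture (κ x) fun u => P x u G

theorem transition_mem_simplex (hP : IsKernel P) (hp : p ∈ simplex X) (hκ : ∀ x, κ x ∈ simplex U)
    (hG : G ∈ subProb X) : transition P p κ G ∈ simplex X :=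
  mixture_mem_simplex hp fun x => mixture_mem_simplex (hκ x) fun u => hP x u G hG

theorem l1dist_transition_le (hP : IsKernel P) (hPLip : KernelLipschitz P LP)
    (hp' : p' ∈ simplex X) (hκ : ∀ x, κ x ∈ simplex U) (hκ' : ∀ x, κ' x ∈ simplex U)
    (hG : G ∈ subProb X) (hG' : G' ∈ subProb X) {ε : ℝ} (hε : 0 ≤ ε)
    (hκκ' : ∀ x, l1dist (κ x) (κ' x) ≤ ε) :
    l1dist (transition P p κ G) (transition P p' κ' G') ≤
      l1dist p p' + (ε + LP * l1dist G G') := by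
  have hGG' : 0 ≤ LP * l1dist G G' := mul_nonneg LP.2 (l1dist_nonneg G G')
  have hPG (x : X) (u : U) : P x u G ∈ simplex X := hP x u G hG
  refine l1dist_mixture_le (simplex_subset_subProb hp')
    (fun x => simplex_subset_subProb (mixture_mem_simplex (hκ x) (hPG x)))
    (add_nonneg hε hGG') fun x => ?_
  calc l1dist (mixture (κ x) fun u => P x u G) (mixture (κ' x) fun u => P x u G')
      ≤ l1dist (κ x) (κ' x) + LP * l1dist G G' :=
        l1dist_mixture_le (simplex_subset_subProb (hκ' x))
          (fun u => simplex_subset_subProb (hPG x u)) hGG' fun u => hPLip x u G G' hG hG'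
    _ ≤ ε + LP * l1dist G G' := by gcongr; exact hκκ' x

end Transition

section MeanField

variable {M : ℕ} {W : ℝ → ℝ → ℝ}

theorem graphon_weights_mem_subProb (hW : ∀ a b, W a b ∈ Set.Icc (0 : ℝ) 1) (m : Fin M) :
    (fun n => (M : ℝ)⁻¹ * W (rep M m) (rep M n)) ∈ subProb (Fin M) := by
  refine ⟨fun n => mul_nonneg (by positivity) (hW _ _).1, ?_⟩
  calc ∑ n, (M : ℝ)⁻¹ * W (rep M m) (rep M n) ≤ ∑ _n : Fin M, (M : ℝ)⁻¹ * 1 := by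
        gcongr
        exact (hW _ _).2
    _ = (M : ℝ)⁻¹ * M := by simp [mul_comm]
    _ ≤ 1 := inv_mul_le_one

theorem approxNbhd_eq_mixture (ν : Fin M → X → ℝ) (m : Fin M) :
    approxNbhd W ν m = mixture (fun n => (M : ℝ)⁻¹ * W (rep M m) (rep M n)) ν := by
  ext x
  simp only [approxNbhd, mixture, mul_sum, mul_assoc]

theorem approxNbhd_mem_subProb (hW : ∀ a b, W a b ∈ Set.Icc (0 : ℝ) 1) {ν : Fin M → X → ℝ}
    (hν : ∀ n, ν n ∈ subProb X) (m : Fin M) : approxNbhd W ν m ∈ subProb X := by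
  rw [approxNbhd_eq_mixture]
  exact mixture_mem_subProb (graphon_weights_mem_subProb hW m) hν

theorem l1dist_approxNbhd_le (hW : ∀ a b, W a b ∈ Set.Icc (0 : ℝ) 1) {ν ν' : Fin M → X → ℝ}
    (hν : ∀ n, ν n ∈ subProb X) {δ : ℝ} (hδ : 0 ≤ δ) (hνν' : ∀ n, l1dist (ν n) (ν' n) ≤ δ)
    (m : Fin M) : l1dist (approxNbhd W ν m) (approxNbhd W ν' m) ≤ δ := by
  simpa only [approxNbhd_eq_mixture, l1dist_self, zero_add] using
    l1dist_mixture_le (w := fun n => (M : ℝ)⁻¹ * W (rep M m) (rep M n))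
      (graphon_weights_mem_subProb hW m) hν hδ hνν'

variable {μ0 : X → ℝ} {π π' : Fin M → ℕ → X → U → ℝ}

theorem approxMF_succ (t : ℕ) (m : Fin M) :
    approxMF W P μ0 π (t + 1) m =
      transition P (approxMF W P μ0 π t m) (π m t) (approxNbhd W (approxMF W P μ0 π t) m) :=
  rfl

theorem approxMF_mem_simplex (hP : IsKernel P) (hW : ∀ a b, W a b ∈ Set.Icc (0 : ℝ) 1)
    (hμ0 : μ0 ∈ simplex X) (hπ : ∀ m, IsPolicy (π m)) (t : ℕ) (m : Fin M) :
    approxMF W P μ0 π t m ∈ simplex X := by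
  induction t generalizing m with
  | zero => exact hμ0
  | succ t ih =>
    exact transition_mem_simplex hP (ih m) (hπ m t)
      (approxNbhd_mem_subProb hW (fun n => simplex_subset_subProb (ih n)) m)

theorem l1dist_approxMF_le (hP : IsKernel P) (hPLip : KernelLipschitz P LP)
    (hW : ∀ a b, W a b ∈ Set.Icc (0 : ℝ) 1) (hμ0 : μ0 ∈ simplex X) (hπ : ∀ m, IsPolicy (π m))
    (hπ' : ∀ m, IsPolicy (π' m)) {ε : ℝ} (hε : 0 ≤ ε)
    (hππ' : ∀ m t x, l1dist (π m t x) (π' m t x) ≤ ε) (t : ℕ) (m : Fin M) :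
    l1dist (approxMF W P μ0 π t m) (approxMF W P μ0 π' t m) ≤
      (∑ i ∈ range t, (1 + LP) ^ i : ℝ≥0) * ε := by
  induction t generalizing m with
  | zero => simp [approxMF, l1dist_self]
  | succ t ih =>
    set S : ℝ≥0 := ∑ i ∈ range t, (1 + LP) ^ i
    have hgeom : ∑ i ∈ range (t + 1), (1 + LP) ^ i = (1 + LP) * S + 1 := geom_sum_succ
    have hmem := approxMF_mem_simplex hP hW hμ0 hπ t
    have hmem' := approxMF_mem_simplex hP hW hμ0 hπ' t
    have hnbhd : l1dist (approxNbhd W (approxMF W P μ0 π t) m)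
        (approxNbhd W (approxMF W P μ0 π' t) m) ≤ S * ε :=
      l1dist_approxNbhd_le hW (fun n => simplex_subset_subProb (hmem n)) (by positivity) ih m
    calc l1dist (approxMF W P μ0 π (t + 1) m) (approxMF W P μ0 π' (t + 1) m)
        ≤ l1dist (approxMF W P μ0 π t m) (approxMF W P μ0 π' t m) +
            (ε + LP * l1dist (approxNbhd W (approxMF W P μ0 π t) m)
              (approxNbhd W (approxMF W P μ0 π' t) m)) := by
          simp only [approxMF_succ]
          exact l1dist_transition_le hP hPLip (hmem' m) (hπ m t) (hπ' m t)
            (approxNbhd_mem_subProb hW (fun n => simplex_subset_subProb (hmem n)) m)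
            (approxNbhd_mem_subProb hW (fun n => simplex_subset_subProb (hmem' n)) m) hε (hππ' m t)
      _ ≤ S * ε + (ε + LP * (S * ε)) := by
          gcongr
          exact ih m
      _ = (∑ i ∈ range (t + 1), (1 + LP) ^ i : ℝ≥0) * ε := by
          rw [hgeom]
          push_cast
          ring

end MeanField

section Boltzmann

variable [Nonempty U] {M T : ℕ} {W : ℝ → ℝ → ℝ} {η : ℝ}

theorem boltzmann_eq_softmax (ν : ℕ → Fin M → X → ℝ) (m : Fin M) (t : ℕ) (x : X) :
    boltzmann T η r P W ν m t x =
      softmax fun u => Qfun r P (fun s => approxNbhd W (ν s) m) (T - t) t x u / η :=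
  rfl

theorem isPolicy_boltzmann (ν : ℕ → Fin M → X → ℝ) (m : Fin M) :
    IsPolicy (boltzmann T η r P W ν m) :=
  fun _ _ => softmax_mem_simplex _

theorem exists_l1dist_boltzmann_le (hP : IsKernel P) (hPLip : KernelLipschitz P LP)
    (hrLip : RewardLipschitz r Lr) (hW : ∀ a b, W a b ∈ Set.Icc (0 : ℝ) 1) (T : ℕ) :
    ∃ K : ℝ≥0, ∀ η > 0, ∀ ν ν' : ℕ → Fin M → X → ℝ, (∀ s n, ν s n ∈ subProb X) →
      (∀ s n, ν' s n ∈ subProb X) → ∀ δ : ℝ, 0 ≤ δ →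
      (∀ s < T, ∀ n, l1dist (ν s n) (ν' s n) ≤ δ) → ∀ m t x,
        l1dist (boltzmann T η r P W ν m t x) (boltzmann T η r P W ν' m t x) ≤ K / η * δ := by
  obtain ⟨R, hR⟩ := hrLip.exists_abs_le
  refine ⟨4 * (T * (Lr + LP * (T * R))), fun η hη ν ν' hν hν' δ hδ hνν' m t x => ?_⟩
  have hQ (u : U) :
      |Qfun r P (fun s => approxNbhd W (ν s) m) (T - t) t x u -
        Qfun r P (fun s => approxNbhd W (ν' s) m) (T - t) t x u| ≤
          T * (Lr + LP * (T * R)) * δ :=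
    calc _ ≤ ↑(T - t) * (Lr + LP * (↑(T - t) * R)) * δ :=
          abs_Qfun_sub_Qfun_le hP hPLip hrLip hR (fun s => approxNbhd_mem_subProb hW (hν s) m)
            (fun s => approxNbhd_mem_subProb hW (hν' s) m) hδ _ _
            (fun s hts hsT => l1dist_approxNbhd_le hW (hν s) hδ (hνν' s (by omega)) m) x u
      _ ≤ T * (Lr + LP * (T * R)) * δ := by
          gcongr <;> exact Nat.sub_le T t
  calc l1dist (boltzmann T η r P W ν m t x) (boltzmann T η r P W ν' m t x)
      ≤ 4 * (T * (Lr + LP * (T * R)) * δ / η) := by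
        simp only [boltzmann_eq_softmax]
        refine l1dist_softmax_le fun u => ?_
        rw [← sub_div, abs_div, abs_of_pos hη]
        gcongr
        exact hQ u
    _ = (4 * (T * (Lr + LP * (T * R))) : ℝ≥0) / η * δ := by
        push_cast
        ring

variable {μ0 : X → ℝ}

theorem boltzIter_mem_simplex (hP : IsKernel P) (hW : ∀ a b, W a b ∈ Set.Icc (0 : ℝ) 1)
    (hμ0 : μ0 ∈ simplex X) (ν : ℕ → Fin M → X → ℝ) (t : ℕ) (m : Fin M) :
    boltzIter T η r P W μ0 ν t m ∈ simplex X :=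
  approxMF_mem_simplex hP hW hμ0 (isPolicy_boltzmann ν) t m

theorem exists_l1dist_boltzIter_le (hP : IsKernel P) (hPLip : KernelLipschitz P LP)
    (hrLip : RewardLipschitz r Lr) (hW : ∀ a b, W a b ∈ Set.Icc (0 : ℝ) 1)
    (hμ0 : μ0 ∈ simplex X) (T : ℕ) :
    ∃ C : ℕ → ℝ≥0, ∀ η > 0, ∀ ν ν' : ℕ → Fin M → X → ℝ, (∀ s n, ν s n ∈ subProb X) →
      (∀ s n, ν' s n ∈ subProb X) → ∀ δ : ℝ, 0 ≤ δ →
      (∀ s < T, ∀ n, l1dist (ν s n) (ν' s n) ≤ δ) → ∀ t m,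
        l1dist (boltzIter T η r P W μ0 ν t m) (boltzIter T η r P W μ0 ν' t m) ≤ C t / η * δ := by
  obtain ⟨K, hK⟩ := exists_l1dist_boltzmann_le (M := M) hP hPLip hrLip hW T
  refine ⟨fun t => (∑ i ∈ range t, (1 + LP) ^ i) * K,
    fun η hη ν ν' hν hν' δ hδ hνν' t m => ?_⟩
  calc l1dist (boltzIter T η r P W μ0 ν t m) (boltzIter T η r P W μ0 ν' t m)
      ≤ (∑ i ∈ range t, (1 + LP) ^ i : ℝ≥0) * (K / η * δ) :=
        l1dist_approxMF_le hP hPLip hW hμ0 (isPolicy_boltzmann ν) (isPolicy_boltzmann ν')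
          (by positivity) (hK η hη ν ν' hν hν' δ hδ hνν') t m
    _ = ((∑ i ∈ range t, (1 + LP) ^ i) * K : ℝ≥0) / η * δ := by
        push_cast
        ring

theorem exists_dist_boltzIter_le (hP : IsKernel P) (hPLip : KernelLipschitz P LP)
    (hrLip : RewardLipschitz r Lr) (hW : ∀ a b, W a b ∈ Set.Icc (0 : ℝ) 1)
    (hμ0 : μ0 ∈ simplex X) (T : ℕ) :
    ∃ C : ℕ → ℝ≥0, ∀ η > 0, ∀ ν ν' : ℕ → Fin M → X → ℝ, (∀ s n, ν s n ∈ subProb X) →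
      (∀ s n, ν' s n ∈ subProb X) → ∀ t,
        dist (boltzIter T η r P W μ0 ν t) (boltzIter T η r P W μ0 ν' t) ≤
          C t / η * dist ((range T).restrict ν) ((range T).restrict ν') := by
  obtain ⟨C, hC⟩ := exists_l1dist_boltzIter_le (M := M) hP hPLip hrLip hW hμ0 T
  refine ⟨fun t => C t * Fintype.card X, fun η hη ν ν' hν hν' t => ?_⟩
  set d := dist ((range T).restrict ν) ((range T).restrict ν')
  have hνν' : ∀ s < T, ∀ n, l1dist (ν s n) (ν' s n) ≤ Fintype.card X * d := fun s hs n =>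
    calc l1dist (ν s n) (ν' s n) ≤ Fintype.card X * dist (ν s n) (ν' s n) :=
          l1dist_le_card_mul_dist _ _
      _ ≤ Fintype.card X * dist (ν s) (ν' s) := by
          gcongr
          exact dist_le_pi_dist (ν s) (ν' s) n
      _ ≤ Fintype.card X * d := by
          gcongr
          exact dist_le_pi_dist ((range T).restrict ν) ((range T).restrict ν')
            ⟨s, Finset.mem_range.2 hs⟩
  refine (dist_pi_le_iff (by positivity)).2 fun m => ?_
  calc dist (boltzIter T η r P W μ0 ν t m) (boltzIter T η r P W μ0 ν' t m)
      ≤ l1dist (boltzIter T η r P W μ0 ν t m) (boltzIter T η r P W μ0 ν' t m) :=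
        dist_le_l1dist _ _
    _ ≤ C t / η * (Fintype.card X * d) :=
        hC η hη ν ν' hν hν' _ (by positivity) hνν' t m
    _ = (C t * Fintype.card X : ℝ≥0) / η * d := by
        push_cast
        ring

end Boltzmann

end Model

theorem boltzmann_iteration_converges_general
    {𝒳 𝒰 : Type*} [Fintype 𝒳] [Fintype 𝒰] [Nonempty 𝒰]
    (T : ℕ) {μ0 : 𝒳 → ℝ} (hμ0 : μ0 ∈ simplex 𝒳)
    {P : 𝒳 → 𝒰 → (𝒳 → ℝ) → 𝒳 → ℝ} (hP : IsKernel P)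
    {r : 𝒳 → 𝒰 → (𝒳 → ℝ) → ℝ}
    {Lr LP : ℝ} (hrLip : RewardLipschitz r Lr) (hPLip : KernelLipschitz P LP)
    {W : ℝ → ℝ → ℝ} (hW : ∀ a b, W a b ∈ Set.Icc (0 : ℝ) 1) (M : ℕ) :
    ∃ η₀ : ℝ, 0 < η₀ ∧ ∀ η > η₀, ∃ νs : ℕ → Fin M → 𝒳 → ℝ,
      IsFixedPt (boltzIter T η r P W μ0) νs ∧
        ∀ ν0, Tendsto (fun n => (boltzIter T η r P W μ0)^[n] ν0) atTop (𝓝 νs) := by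
  obtain ⟨C, hC⟩ :=
    exists_dist_boltzIter_le (M := M) hP hPLip.toNNReal hrLip.toNNReal hW hμ0 T
  refine ⟨(range T).sup C + 1, by positivity, fun η hη => ?_⟩
  have hη0 : 0 < η := lt_of_le_of_lt (by positivity) hη
  have hcontract : ∀ t ∈ range T, C t / η.toNNReal < 1 := fun t ht => by
    rw [div_lt_one (Real.toNNReal_pos.2 hη0), Real.lt_toNNReal_iff_coe_lt]
    calc (C t : ℝ) ≤ (range T).sup C := by exact_mod_cast Finset.le_sup ht
      _ < η := by linarith
  have hsub {ν : ℕ → Fin M → 𝒳 → ℝ} (hν : ∀ s, ν s ∈ Set.univ.pi fun _ => simplex 𝒳) (s : ℕ)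
      (n : Fin M) : ν s n ∈ subProb 𝒳 := simplex_subset_subProb (hν s n trivial)
  refine exists_isFixedPt_tendsto_iterate_of_dist_le_restrict_of_mem
    (S := Set.univ.pi fun _ => simplex 𝒳)
    (isClosed_set_pi fun _ _ => isClosed_simplex).isComplete
    ⟨fun _ => μ0, fun _ _ => hμ0⟩ (range T)
    (fun ν t m _ => boltzIter_mem_simplex hP hW hμ0 ν t m) (fun ν ν' hν hν' t => ?_) hcontract
  rw [NNReal.coe_div, Real.coe_toNNReal η hη0.le]
  exact hC η hη0 ν ν' (hsub hν) (hsub hν') t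

/-- under Assumptions (W) and (Lip), the M equivalence classes algorithm
with Boltzmann (softmax) policies converges for all sufficiently high temperatures η > 0:
there exists η₀ > 0 such that for every η > η₀, the iteration 𝛍^{n+1} = Ψ̂(Φ̂_η(𝛍^n))
converges to a fixed point. -/
theorem boltzmann_iteration_converges
    {𝒳 𝒰 : Type*} [Fintype 𝒳] [Nonempty 𝒳] [Fintype 𝒰] [Nonempty 𝒰]
    (T : ℕ) (μ0 : 𝒳 → ℝ) (hμ0 : μ0 ∈ simplex 𝒳)
    (P : 𝒳 → 𝒰 → (𝒳 → ℝ) → 𝒳 → ℝ) (hP : IsKernel P)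
    (r : 𝒳 → 𝒰 → (𝒳 → ℝ) → ℝ)
    (Lr LP LW : ℝ) (hrLip : RewardLipschitz r Lr) (hPLip : KernelLipschitz P LP)
    (W : ℝ → ℝ → ℝ) (hW : IsGraphon W) (hWLip : GraphonLipschitz W LW)
    (ξ : (N : ℕ) → Fin N → Fin N → ℝ) (hξ : ∀ N, IsEdgeWeights (ξ N))
    (hWconv : OpConvergesTo (fun N => stepGraphon (ξ N)) W)
    (M : ℕ) (hM : 0 < M) :
    ∃ η₀ : ℝ, 0 < η₀ ∧ ∀ η > η₀,
      ∀ ν0 : ℕ → Fin M → 𝒳 → ℝ, (∀ t m, ν0 t m ∈ simplex 𝒳) →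
        ∃ νs : ℕ → Fin M → 𝒳 → ℝ,
          boltzIter T η r P W μ0 νs = νs ∧
          ∀ (t : ℕ) (m : Fin M) (x : 𝒳),
            Filter.Tendsto (fun n => (fun ν => boltzIter T η r P W μ0 ν)^[n] ν0 t m x)
              Filter.atTop (nhds (νs t m x)) := by
  obtain ⟨η₀, hη₀, hconv⟩ := boltzmann_iteration_converges_general T hμ0 hP hrLip hPLip hW.2.2 M
  refine ⟨η₀, hη₀, fun η hη ν0 _ => ?_⟩
  obtain ⟨νs, hfix, hlim⟩ := hconv η hη
  exact ⟨νs, hfix, fun t m x => ((hlim ν0).apply_nhds t |>.apply_nhds m).apply_nhds x⟩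

end GMFG
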